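/- arXiv:2311.04429 — 8 statements merged into one kernel-verified Lean document; each statement's English description precedes it below -/
import Mathlib

section
/- For every simple graph Γ there exists a simple graph Γ′ such that Γ′ admits a partial orientation as a quasi-transitive mixed graph and Γ is an induced subgraph of Γ′. Consequently, the family of graphs admitting such a partial orientation has no forbidden (induced) subgraph characterisation. -/
/-!
Start with any oriented graph `D` and add an undirected edge between the ends of every induced
2-dipath. No arc is added, so the set of 2-dipaths is unchanged and the result is quasi-transitive
(`quasiTransitive_closure`).

Apply this to the subdivision of `Γ` with one new vertex for each dart (ordered adjacent pair)
`d = (a, b)` and the arcs `a → d → b`. Two original vertices are never joined by an arc, and they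
are the ends of a 2-dipath exactly when they are adjacent in `Γ`. Hence the closure induces `Γ` on
the original vertices.
-/

/-- A mixed graph: a vertex set with undirected edges and arcs, at most one
edge or arc between any pair of distinct vertices, and no loops. -/
structure MixedGraph (V : Type*) where
  Edge : V → V → Prop
  Arc : V → V → Prop
  edge_symm : ∀ u v, Edge u v → Edge v u
  edge_irrefl : ∀ v, ¬ Edge v v
  arc_irrefl : ∀ v, ¬ Arc v v
  arc_asymm : ∀ u v, Arc u v → ¬ Arc v u
  edge_arc_disjoint : ∀ u v, Edge u v → ¬ Arc u v

/-- A mixed graph is quasi-transitive when it has no induced 2-dipath and the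
ends of every undirected edge are joined by a 2-dipath. -/
def MixedGraph.QuasiTransitive {V : Type*} (H : MixedGraph V) : Prop :=
  (∀ u v w, H.Arc u v → H.Arc v w → H.Edge u w ∨ H.Arc u w ∨ H.Arc w u) ∧
  (∀ u v, H.Edge u v → ∃ w, (H.Arc u w ∧ H.Arc w v) ∨ (H.Arc v w ∧ H.Arc w u))

/-- `H` is a partial orientation of the simple graph `Γ`: the underlying
simple graph of `H` is `Γ`. -/
def MixedGraph.IsPartialOrientationOf {V : Type*} (H : MixedGraph V) (Γ : SimpleGraph V) : Prop :=
  ∀ u v, Γ.Adj u v ↔ (H.Edge u v ∨ H.Arc u v ∨ H.Arc v u)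

/-- A source of a mixed graph: no arc is directed into `v`. -/
def MixedGraph.IsSource {V : Type*} (H : MixedGraph V) (v : V) : Prop := ∀ u, ¬ H.Arc u v

/-- A sink of a mixed graph: no arc is directed out of `v`. -/
def MixedGraph.IsSink {V : Type*} (H : MixedGraph V) (v : V) : Prop := ∀ u, ¬ H.Arc v u

universe u

/-- The mixed graph obtained from an oriented graph, given by an asymmetric arc relation, by
joining the ends of every induced 2-dipath by an undirected edge. -/
def quasiTransitiveClosure {W : Type u} (A : W → W → Prop) (asymm : ∀ u v, A u v → ¬ A v u) :
    MixedGraph W where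
  Edge u v := ¬ A u v ∧ ¬ A v u ∧ ∃ w, (A u w ∧ A w v) ∨ (A v w ∧ A w u)
  Arc := A
  edge_symm := fun _ _ ⟨h₁, h₂, w, h⟩ => ⟨h₂, h₁, w, h.symm⟩
  edge_irrefl := by
    rintro v ⟨-, -, w, h | h⟩ <;> exact asymm _ _ h.1 h.2
  arc_irrefl v h := asymm v v h h
  arc_asymm := asymm
  edge_arc_disjoint _ _ h := h.1

theorem quasiTransitive_closure {W : Type u} (A : W → W → Prop)
    (asymm : ∀ u v, A u v → ¬ A v u) : (quasiTransitiveClosure A asymm).QuasiTransitive := by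
  refine ⟨fun u v w huv hvw => ?_, fun u v h => h.2.2⟩
  by_cases h₁ : A u w
  · exact Or.inr (Or.inl h₁)
  by_cases h₂ : A w u
  · exact Or.inr (Or.inr h₂)
  exact Or.inl ⟨h₁, h₂, v, Or.inl ⟨huv, hvw⟩⟩

/-- The arcs `a → d → b` of the directed subdivision of `Γ`, for each dart `d = (a, b)`. -/
def dartArc {V : Type u} (Γ : SimpleGraph V) : V ⊕ Γ.Dart → V ⊕ Γ.Dart → Prop
  | Sum.inl a, Sum.inr d => d.fst = a
  | Sum.inr d, Sum.inl b => d.snd = b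
  | _, _ => False

theorem dartArc_asymm {V : Type u} (Γ : SimpleGraph V) (x y : V ⊕ Γ.Dart) :
    dartArc Γ x y → ¬ dartArc Γ y x := by
  rcases x with a | d <;> rcases y with b | e
  · exact fun h => h.elim
  · exact fun h h' => Γ.ne_of_adj e.adj (Eq.trans h (Eq.symm h'))
  · exact fun h h' => Γ.ne_of_adj d.adj (Eq.trans h' (Eq.symm h))
  · exact fun h => h.elim

/-- A 2-dipath between original vertices passes through a dart joining them. -/
theorem exists_dartArc_iff {V : Type u} (Γ : SimpleGraph V) (a b : V) :
    (∃ w, dartArc Γ (Sum.inl a) w ∧ dartArc Γ w (Sum.inl b)) ↔ Γ.Adj a b := by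
  constructor
  · rintro ⟨c | d, h₁, h₂⟩
    · exact h₁.elim
    · obtain rfl : d.fst = a := h₁
      obtain rfl : d.snd = b := h₂
      exact d.adj
  · exact fun h => ⟨Sum.inr ⟨(a, b), h⟩, rfl, rfl⟩

/-- Every simple graph `Γ` is an induced subgraph of some graph `Γ'` that
admits a partial orientation as a quasi-transitive mixed graph; hence the
family of such graphs has no forbidden induced subgraph characterisation. -/
theorem exists_induced_supergraph_quasiTransitive_partial_orientation
    {V : Type u} (Γ : SimpleGraph V) :
    ∃ (W : Type u) (Γ' : SimpleGraph W) (f : V ↪ W),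
      (∀ a b : V, Γ'.Adj (f a) (f b) ↔ Γ.Adj a b) ∧
      ∃ H : MixedGraph W, H.IsPartialOrientationOf Γ' ∧ H.QuasiTransitive := by
  let H := quasiTransitiveClosure (dartArc Γ) (dartArc_asymm Γ)
  let Γ' : SimpleGraph (V ⊕ Γ.Dart) :=
    { Adj := fun u v => H.Edge u v ∨ H.Arc u v ∨ H.Arc v u
      symm := ⟨fun u v h => h.imp (H.edge_symm u v) Or.symm⟩
      loopless := ⟨fun v h => h.elim (H.edge_irrefl v)
        fun h' => h'.elim (H.arc_irrefl v) (H.arc_irrefl v)⟩ }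
  refine ⟨V ⊕ Γ.Dart, Γ', Function.Embedding.inl, fun a b => ?_, H, fun u v => Iff.rfl,
    quasiTransitive_closure _ _⟩
  constructor
  · rintro (⟨-, -, w, h | h⟩ | h | h)
    · exact (exists_dartArc_iff Γ a b).1 ⟨w, h⟩
    · exact ((exists_dartArc_iff Γ b a).1 ⟨w, h⟩).symm
    · exact h.elim
    · exact h.elim
  · intro h
    obtain ⟨w, hw⟩ := (exists_dartArc_iff Γ a b).2 h
    exact Or.inl ⟨id, id, w, Or.inl hw⟩
end

section
/- Let Γ be a simple graph and let G be a partial orientation of Γ as a quasi-transitive mixed graph. If e = xy is an edge of Γ contained in no triangle (copy of K₃) of Γ, then e is oriented as an arc (in one of the two directions) in G, and each of x and y is a source or a sink in G. -/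
/-- The tail of an arc contained in no triangle is a source, and its head is a sink. -/
theorem MixedGraph.isSource_and_isSink_of_arc {V : Type*} (Γ : SimpleGraph V) (H : MixedGraph V)
    (hPO : H.IsPartialOrientationOf Γ) (hQT : H.QuasiTransitive)
    (x y : V) (h : H.Arc x y) (htri : ∀ z, ¬(Γ.Adj x z ∧ Γ.Adj z y)) :
    H.IsSource x ∧ H.IsSink y := by
  refine ⟨fun u hu => ?_, fun u hu => ?_⟩
  · exact htri u ⟨(hPO x u).2 (.inr (.inr hu)), (hPO u y).2 (hQT.1 u x y hu h)⟩
  · exact htri u ⟨(hPO x u).2 (hQT.1 x y u h hu), (hPO u y).2 (.inr (.inr hu))⟩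

/-- If `xy` is an edge of `Γ` contained in no triangle of `Γ`, then in every
partial orientation of `Γ` as a quasi-transitive mixed graph, `xy` is oriented
as an arc and each of `x` and `y` is a source or a sink. -/
theorem nonTriangle_edge_oriented_and_ends_source_or_sink
    {V : Type*} (Γ : SimpleGraph V) (H : MixedGraph V)
    (hPO : H.IsPartialOrientationOf Γ) (hQT : H.QuasiTransitive)
    (x y : V) (hxy : Γ.Adj x y) (htri : ∀ z, ¬(Γ.Adj x z ∧ Γ.Adj z y)) :
    (H.Arc x y ∨ H.Arc y x) ∧
    (H.IsSource x ∨ H.IsSink x) ∧ (H.IsSource y ∨ H.IsSink y) := by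
  rcases (hPO x y).1 hxy with he | ha | ha
  · obtain ⟨w, ⟨h₁, h₂⟩ | ⟨h₁, h₂⟩⟩ := hQT.2 x y he
    · exact absurd ⟨(hPO x w).2 (.inr (.inl h₁)), (hPO w y).2 (.inr (.inl h₂))⟩ (htri w)
    · exact absurd ⟨(hPO x w).2 (.inr (.inr h₂)), (hPO w y).2 (.inr (.inr h₁))⟩ (htri w)
  · obtain ⟨hx, hy⟩ := H.isSource_and_isSink_of_arc Γ hPO hQT x y ha htri
    exact ⟨.inl ha, .inl hx, .inr hy⟩
  · obtain ⟨hy, hx⟩ := H.isSource_and_isSink_of_arc Γ hPO hQT y x ha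
      fun z hz => htri z ⟨hz.2.symm, hz.1.symm⟩
    exact ⟨.inr ha, .inr hx, .inl hy⟩
end

section
/- (Vertex Cut Lemma) Let Γ be a simple graph and let I = {v₁,…,v_k} be an independent vertex cut of Γ, witnessed by a partition {V₁, V₂, I} of the vertex set such that no vertex of V₁ is adjacent to a vertex of V₂ and every vertex of I has a neighbour in V₁ and a neighbour in V₂. Then Γ admits a partial orientation as a quasi-transitive mixed graph if and only if there exist partial orientations G₁ of the induced subgraph Γ[V₁ ∪ I] and G₂ of the induced subgraph Γ[V₂ ∪ I] as quasi-transitive mixed graphs such that for each 1 ≤ i ≤ k, either vᵢ is a source in both G₁ and G₂, or vᵢ is a sink in both G₁ and G₂. -/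
namespace MixedGraph

variable {V : Type*}

/-- The underlying adjacency relation: an edge, or an arc in either direction. -/
def Joined (H : MixedGraph V) (u v : V) : Prop := H.Edge u v ∨ H.Arc u v ∨ H.Arc v u

/-- The mixed subgraph induced on a set of vertices. -/
def restrict (H : MixedGraph V) (S : Set V) : MixedGraph S where
  Edge u v := H.Edge u v
  Arc u v := H.Arc u v
  edge_symm u v := H.edge_symm u v
  edge_irrefl v := H.edge_irrefl v
  arc_irrefl v := H.arc_irrefl v
  arc_asymm u v := H.arc_asymm u v
  edge_arc_disjoint u v := H.edge_arc_disjoint u v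

/-- A mixed graph on a subset, regarded as a mixed graph on the whole type by adding isolated
vertices. -/
def extend {S : Set V} (G : MixedGraph S) : MixedGraph V where
  Edge u v := ∃ hu hv, G.Edge ⟨u, hu⟩ ⟨v, hv⟩
  Arc u v := ∃ hu hv, G.Arc ⟨u, hu⟩ ⟨v, hv⟩
  edge_symm := fun _ _ ⟨hu, hv, h⟩ => ⟨hv, hu, G.edge_symm _ _ h⟩
  edge_irrefl := fun _ ⟨_, _, h⟩ => G.edge_irrefl _ h
  arc_irrefl := fun _ ⟨_, _, h⟩ => G.arc_irrefl _ h
  arc_asymm := fun _ _ ⟨_, _, h⟩ ⟨_, _, h'⟩ => G.arc_asymm _ _ h h'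
  edge_arc_disjoint := fun _ _ ⟨_, _, he⟩ ⟨_, _, ha⟩ => G.edge_arc_disjoint _ _ he ha

/-- The union of two mixed graphs on the same vertices that join no common pair. -/
def union (A B : MixedGraph V) (hAB : ∀ u v, A.Joined u v → ¬ B.Joined u v) : MixedGraph V where
  Edge u v := A.Edge u v ∨ B.Edge u v
  Arc u v := A.Arc u v ∨ B.Arc u v
  edge_symm u v := Or.imp (A.edge_symm u v) (B.edge_symm u v)
  edge_irrefl v := not_or.2 ⟨A.edge_irrefl v, B.edge_irrefl v⟩
  arc_irrefl v := not_or.2 ⟨A.arc_irrefl v, B.arc_irrefl v⟩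
  arc_asymm u v := by
    have := hAB u v
    have := A.arc_asymm u v
    have := B.arc_asymm u v
    unfold Joined at *
    tauto
  edge_arc_disjoint u v := by
    have := hAB u v
    have := A.edge_arc_disjoint u v
    have := B.edge_arc_disjoint u v
    unfold Joined at *
    tauto

lemma QuasiTransitive.restrict {H : MixedGraph V} (hH : H.QuasiTransitive) {S : Set V}
    (hS : ∀ u ∈ S, ∀ v ∈ S, ∀ w, H.Joined u v → H.Joined u w → H.Joined v w → w ∈ S) :
    (H.restrict S).QuasiTransitive := by
  refine ⟨fun u v w => hH.1 u v w, fun u v huv => ?_⟩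
  obtain ⟨w, hw⟩ := hH.2 u v huv
  have hwS : w ∈ S := hS u u.2 v v.2 w (Or.inl huv)
    (by unfold Joined; tauto) (by unfold Joined; tauto)
  exact ⟨⟨w, hwS⟩, hw⟩

lemma QuasiTransitive.extend {S : Set V} {G : MixedGraph S} (hG : G.QuasiTransitive) :
    G.extend.QuasiTransitive := by
  refine ⟨?_, ?_⟩
  · rintro u v w ⟨hu, hv, h⟩ ⟨_, hw, h'⟩
    exact (hG.1 _ _ _ h h').imp (fun k => ⟨hu, hw, k⟩)
      (Or.imp (fun k => ⟨hu, hw, k⟩) (fun k => ⟨hw, hu, k⟩))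
  · rintro u v ⟨hu, hv, h⟩
    obtain ⟨w, hw⟩ := hG.2 _ _ h
    exact ⟨w, hw.imp (fun k => ⟨⟨hu, w.2, k.1⟩, ⟨w.2, hv, k.2⟩⟩)
      (fun k => ⟨⟨hv, w.2, k.1⟩, ⟨w.2, hu, k.2⟩⟩)⟩

lemma QuasiTransitive.union {A B : MixedGraph V} (hA : A.QuasiTransitive)
    (hB : B.QuasiTransitive) (hAB : ∀ u v, A.Joined u v → ¬ B.Joined u v)
    (h₁ : ∀ u v w, A.Arc u v → ¬ B.Arc v w) (h₂ : ∀ u v w, B.Arc u v → ¬ A.Arc v w) :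
    (A.union B hAB).QuasiTransitive := by
  refine ⟨?_, ?_⟩
  · rintro u v w (h | h) (h' | h')
    · exact (hA.1 u v w h h').imp Or.inl (Or.imp Or.inl Or.inl)
    · exact (h₁ u v w h h').elim
    · exact (h₂ u v w h h').elim
    · exact (hB.1 u v w h h').imp Or.inr (Or.imp Or.inr Or.inr)
  · rintro u v (h | h)
    · obtain ⟨w, hw⟩ := hA.2 u v h
      exact ⟨w, hw.imp (And.imp Or.inl Or.inl) (And.imp Or.inl Or.inl)⟩
    · obtain ⟨w, hw⟩ := hB.2 u v h
      exact ⟨w, hw.imp (And.imp Or.inr Or.inr) (And.imp Or.inr Or.inr)⟩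

lemma extend_joined {S : Set V} {G : MixedGraph S} {Γ : SimpleGraph V}
    (hG : G.IsPartialOrientationOf (Γ.induce S)) (u v : V) :
    G.extend.Joined u v ↔ u ∈ S ∧ v ∈ S ∧ Γ.Adj u v := by
  constructor
  · rintro (⟨hu, hv, h⟩ | ⟨hu, hv, h⟩ | ⟨hv, hu, h⟩) <;>
      exact ⟨hu, hv, (hG ⟨u, hu⟩ ⟨v, hv⟩).2 (by tauto)⟩
  · rintro ⟨hu, hv, h⟩
    exact ((hG ⟨u, hu⟩ ⟨v, hv⟩).1 h).imp (fun k => ⟨hu, hv, k⟩)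
      (Or.imp (fun k => ⟨hu, hv, k⟩) (fun k => ⟨hv, hu, k⟩))

/-- Here `S` is one side of the cut and `v` a vertex of the cut: a neighbour of `v` in `S` yields
an arc between `v` and `S`, provided `S` is closed under completing triangles on `v`. -/
lemma exists_arc_of_side {H : MixedGraph V} (hH : H.QuasiTransitive) {S : Set V} {v u : V}
    (hu : u ∈ S) (hvu : H.Joined v u)
    (hS : ∀ x ∈ S, ∀ w, H.Joined v w → H.Joined x w → w ∈ S) :
    ∃ w ∈ S, H.Arc v w ∨ H.Arc w v := by
  rcases hvu with h | h
  · obtain ⟨w, hw⟩ := hH.2 v u h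
    exact ⟨w, hS u hu w (by unfold Joined; tauto) (by unfold Joined; tauto), by tauto⟩
  · exact ⟨u, hu, h⟩

lemma isSource_or_isSink_of_mem_cut {H : MixedGraph V} (hH : H.QuasiTransitive) {S T : Set V}
    {v : V} (hST : ∀ x ∈ S, ∀ y ∈ T, ¬ H.Joined x y)
    (hv : ∀ w, H.Joined v w → w ∈ S ∨ w ∈ T)
    (hS : ∃ u ∈ S, H.Joined v u) (hT : ∃ u ∈ T, H.Joined v u) :
    H.IsSource v ∨ H.IsSink v := by
  have hTS : ∀ x ∈ T, ∀ y ∈ S, ¬ H.Joined x y := fun x hx y hy h =>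
    hST y hy x hx (h.imp (H.edge_symm x y) Or.symm)
  obtain ⟨u, hu, hvu⟩ := hS
  obtain ⟨u', hu', hvu'⟩ := hT
  obtain ⟨s, hs, hvs⟩ := exists_arc_of_side hH hu hvu fun x hx w hw hxw =>
    (hv w hw).resolve_right fun hwT => hST x hx w hwT hxw
  obtain ⟨t, ht, hvt⟩ := exists_arc_of_side hH hu' hvu' fun x hx w hw hxw =>
    (hv w hw).resolve_left fun hwS => hTS x hx w hwS hxw
  by_contra hcon
  simp only [IsSource, IsSink, not_or, not_forall, not_not] at hcon
  obtain ⟨⟨a, ha⟩, ⟨b, hb⟩⟩ := hcon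
  -- The two ends of any 2-dipath centred at `v` lie on the same side.
  have kST : ∀ x ∈ S, ∀ y ∈ T, H.Arc x v → ¬ H.Arc v y :=
    fun x hx y hy h h' => hST x hx y hy (hH.1 x v y h h')
  have kTS : ∀ x ∈ T, ∀ y ∈ S, H.Arc x v → ¬ H.Arc v y :=
    fun x hx y hy h h' => hTS x hx y hy (hH.1 x v y h h')
  rcases hv a (Or.inr (Or.inr ha)) with haS | haT
  · have htv := hvt.resolve_left (kST a haS t ht ha)
    rcases hv b (Or.inr (Or.inl hb)) with hbS | hbT
    · exact kTS t ht b hbS htv hb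
    · exact kST a haS b hbT ha hb
  · have hsv := hvs.resolve_left (kTS a haT s hs ha)
    rcases hv b (Or.inr (Or.inl hb)) with hbS | hbT
    · exact kTS a haT b hbS ha hb
    · exact kST s hs b hbT hsv hb

end MixedGraph

/-- The Vertex Cut Lemma: if `I` is an independent vertex cut of `Γ` witnessed
by the partition `{V₁, V₂, I}`, then `Γ` admits a partial orientation as a
quasi-transitive mixed graph if and only if the induced subgraphs on `V₁ ∪ I`
and `V₂ ∪ I` admit such partial orientations `G₁` and `G₂` in which every
vertex of `I` is a source in both or a sink in both. -/
theorem vertex_cut_lemma {V : Type*} (Γ : SimpleGraph V) (I V1 V2 : Set V)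
    (hd12 : Disjoint V1 V2) (hd1I : Disjoint V1 I) (hd2I : Disjoint V2 I)
    (hcover : V1 ∪ V2 ∪ I = Set.univ)
    (hInd : ∀ u ∈ I, ∀ v ∈ I, ¬ Γ.Adj u v)
    (hSep : ∀ u ∈ V1, ∀ v ∈ V2, ¬ Γ.Adj u v)
    (hdisc : ¬ (Γ.induce (V1 ∪ V2)).Connected)
    (hNbr : ∀ v ∈ I, (∃ u ∈ V1, Γ.Adj v u) ∧ (∃ u ∈ V2, Γ.Adj v u)) :
    (∃ H : MixedGraph V, H.IsPartialOrientationOf Γ ∧ H.QuasiTransitive) ↔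
    (∃ (G1 : MixedGraph ↥(V1 ∪ I)) (G2 : MixedGraph ↥(V2 ∪ I)),
      G1.IsPartialOrientationOf (Γ.induce (V1 ∪ I)) ∧ G1.QuasiTransitive ∧
      G2.IsPartialOrientationOf (Γ.induce (V2 ∪ I)) ∧ G2.QuasiTransitive ∧
      ∀ (v : V) (hv : v ∈ I),
        (G1.IsSource ⟨v, Set.mem_union_right _ hv⟩ ∧
          G2.IsSource ⟨v, Set.mem_union_right _ hv⟩) ∨
        (G1.IsSink ⟨v, Set.mem_union_right _ hv⟩ ∧
          G2.IsSink ⟨v, Set.mem_union_right _ hv⟩)) := by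
  constructor
  · rintro ⟨H, hΓ, hH⟩
    have hJ : ∀ u v, H.Joined u v ↔ Γ.Adj u v := fun u v => (hΓ u v).symm
    have hc : ∀ w, w ∈ V1 ∨ w ∈ V2 ∨ w ∈ I := fun w => by
      have : w ∈ V1 ∪ V2 ∪ I := hcover ▸ Set.mem_univ w
      simpa [or_assoc] using this
    refine ⟨H.restrict _, H.restrict _, fun u v => hΓ u v, hH.restrict ?_,
      fun u v => hΓ u v, hH.restrict ?_, fun v hv => ?_⟩
    · intro u hu v hv w huv huw hvw
      rw [hJ] at huv huw hvw
      rcases hc w with hw | hw | hw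
      · exact Or.inl hw
      · have hu' := hu.resolve_left fun h => hSep u h w hw huw
        have hv' := hv.resolve_left fun h => hSep v h w hw hvw
        exact (hInd u hu' v hv' huv).elim
      · exact Or.inr hw
    · intro u hu v hv w huv huw hvw
      rw [hJ] at huv huw hvw
      rcases hc w with hw | hw | hw
      · have hu' := hu.resolve_left fun h => hSep w hw u h huw.symm
        have hv' := hv.resolve_left fun h => hSep w hw v h hvw.symm
        exact (hInd u hu' v hv' huv).elim
      · exact Or.inl hw
      · exact Or.inr hw
    · have hss : H.IsSource v ∨ H.IsSink v := by
        refine MixedGraph.isSource_or_isSink_of_mem_cut (S := V1) (T := V2) hH ?_ ?_ ?_ ?_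
        · exact fun x hx y hy h => hSep x hx y hy ((hJ x y).1 h)
        · intro w hw
          rcases hc w with h | h | h
          · exact Or.inl h
          · exact Or.inr h
          · exact (hInd v hv w h ((hJ v w).1 hw)).elim
        · simpa only [hJ] using (hNbr v hv).1
        · simpa only [hJ] using (hNbr v hv).2
      exact hss.imp (fun h => ⟨fun u => h u, fun u => h u⟩) (fun h => ⟨fun u => h u, fun u => h u⟩)
  · rintro ⟨G1, G2, hΓ1, hG1, hΓ2, hG2, hss⟩
    have hcap : ∀ v, v ∈ V1 ∪ I → v ∈ V2 ∪ I → v ∈ I := fun v h1 h2 =>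
      h1.elim (fun h => h2.resolve_left fun h' => Set.disjoint_left.1 hd12 h h') id
    have hdis : ∀ u v, G1.extend.Joined u v → ¬ G2.extend.Joined u v := by
      intro u v h1 h2
      rw [MixedGraph.extend_joined hΓ1] at h1
      rw [MixedGraph.extend_joined hΓ2] at h2
      exact hInd u (hcap u h1.1 h2.1) v (hcap v h1.2.1 h2.2.1) h1.2.2
    refine ⟨G1.extend.union G2.extend hdis, fun u v => ?_,
      hG1.extend.union hG2.extend hdis ?_ ?_⟩
    · have hside : Γ.Adj u v ↔ G1.extend.Joined u v ∨ G2.extend.Joined u v := by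
        rw [MixedGraph.extend_joined hΓ1, MixedGraph.extend_joined hΓ2]
        have hu : u ∈ V1 ∪ V2 ∪ I := hcover ▸ Set.mem_univ u
        have hv : v ∈ V1 ∪ V2 ∪ I := hcover ▸ Set.mem_univ v
        have h1 := hSep u
        have h2 := hSep v
        have h3 := Γ.adj_comm u v
        simp only [Set.mem_union] at *
        grind
      rw [hside]
      simp only [MixedGraph.Joined, MixedGraph.union]
      tauto
    · rintro u v w ⟨_, hv1, h⟩ ⟨hv2, _, h'⟩
      rcases hss v (hcap v hv1 hv2) with k | k
      · exact k.1 _ h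
      · exact k.2 _ h'
    · rintro u v w ⟨_, hv2, h⟩ ⟨hv1, _, h'⟩
      rcases hss v (hcap v hv1 hv2) with k | k
      · exact k.2 _ h
      · exact k.1 _ h'
end

section
/- Let Γ be a simple graph with maximum degree three and let u be a removable vertex of Γ. Then Γ admits a partial orientation as a quasi-transitive mixed graph if and only if Γ − u admits a partial orientation as a quasi-transitive mixed graph. -/
/-- In a graph of maximum degree three, a vertex `u` is removable when it has
degree two, its two neighbours are adjacent, each of degree three, and they
have exactly one common neighbour (namely `u`). -/
def SimpleGraph.Removable {V : Type*} (Γ : SimpleGraph V) (u : V) : Prop :=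
  ∃ v w : V, v ≠ w ∧ Γ.neighborSet u = {v, w} ∧ Γ.Adj v w ∧
    (Γ.neighborSet v).ncard = 3 ∧ (Γ.neighborSet w).ncard = 3 ∧
    ∀ z, Γ.Adj v z → Γ.Adj w z → z = u

/-- The mixed graph with all arcs reversed. -/
def MixedGraph.rev {V : Type*} (H : MixedGraph V) : MixedGraph V where
  Edge := H.Edge
  Arc x y := H.Arc y x
  edge_symm := H.edge_symm
  edge_irrefl := H.edge_irrefl
  arc_irrefl := H.arc_irrefl
  arc_asymm x y h h' := H.arc_asymm x y h' h
  edge_arc_disjoint x y h h' := H.edge_arc_disjoint y x (H.edge_symm _ _ h) h'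

theorem MixedGraph.QuasiTransitive.rev {V : Type*} {H : MixedGraph V} (h : H.QuasiTransitive) :
    H.rev.QuasiTransitive := by
  refine ⟨fun x y z hxy hyz => ?_, fun x y hxy => ?_⟩
  · rcases h.1 z y x hyz hxy with h | h | h
    · exact Or.inl (H.edge_symm _ _ h)
    · exact Or.inr (Or.inl h)
    · exact Or.inr (Or.inr h)
  · obtain ⟨z, hz⟩ := h.2 x y hxy
    exact ⟨z, hz.symm.imp And.symm And.symm⟩

theorem MixedGraph.IsPartialOrientationOf.rev {V : Type*} {H : MixedGraph V} {Γ : SimpleGraph V}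
    (h : H.IsPartialOrientationOf Γ) : H.rev.IsPartialOrientationOf Γ := by
  intro x y
  rw [h x y]
  simp only [MixedGraph.rev]
  tauto

/-- The neighbourhood of a removable vertex `u`: its neighbours are `v` and `w`, whose third
neighbours `a` and `b` are distinct. -/
structure RemovableConfig {V : Type*} (Γ : SimpleGraph V) (u v w a b : V) : Prop where
  adj_u : ∀ x, Γ.Adj u x ↔ x = v ∨ x = w
  adj_v : ∀ x, Γ.Adj v x ↔ x = u ∨ x = w ∨ x = a
  adj_w : ∀ x, Γ.Adj w x ↔ x = u ∨ x = v ∨ x = b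
  a_ne_u : a ≠ u
  a_ne_w : a ≠ w
  b_ne_u : b ≠ u
  b_ne_v : b ≠ v
  a_ne_b : a ≠ b

namespace RemovableConfig

variable {V : Type*} {Γ : SimpleGraph V} {u v w a b : V}

theorem symm (c : RemovableConfig Γ u v w a b) : RemovableConfig Γ u w v b a where
  adj_u x := by rw [c.adj_u, or_comm]
  adj_v := c.adj_w
  adj_w := c.adj_v
  a_ne_u := c.b_ne_u
  a_ne_w := c.b_ne_v
  b_ne_u := c.a_ne_u
  b_ne_v := c.a_ne_w
  a_ne_b := c.a_ne_b.symm

/-- A three-element set containing `p ≠ q` has exactly one further element `r`. -/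
theorem exists_third {s : Set V} (hs : s.ncard = 3) {p q : V} (hp : p ∈ s) (hq : q ∈ s)
    (hpq : p ≠ q) : ∃ r, r ≠ p ∧ r ≠ q ∧ ∀ x, x ∈ s ↔ x = p ∨ x = q ∨ x = r := by
  obtain ⟨x, y, z, hxy, hxz, hyz, rfl⟩ := Set.ncard_eq_three.1 hs
  simp only [Set.mem_insert_iff, Set.mem_singleton_iff] at hp hq ⊢
  rcases hp with rfl | rfl | rfl <;> rcases hq with rfl | rfl | rfl
  any_goals exact absurd rfl hpq
  · exact ⟨z, hxz.symm, hyz.symm, by tauto⟩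
  · exact ⟨y, hxy.symm, hyz, by tauto⟩
  · exact ⟨z, hyz.symm, hxz.symm, by tauto⟩
  · exact ⟨x, hxy, hxz, by tauto⟩
  · exact ⟨y, hyz, hxy.symm, by tauto⟩
  · exact ⟨x, hxz, hxy, by tauto⟩

theorem of_removable (hu : Γ.Removable u) : ∃ v w a b, RemovableConfig Γ u v w a b := by
  obtain ⟨v, w, hvw, hN, hadj, hv, hw, hc⟩ := hu
  have adj_u : ∀ x, Γ.Adj u x ↔ x = v ∨ x = w := fun x => by
    rw [← SimpleGraph.mem_neighborSet, hN]; simp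
  have huv : Γ.Adj u v := (adj_u v).2 (Or.inl rfl)
  have huw : Γ.Adj u w := (adj_u w).2 (Or.inr rfl)
  obtain ⟨a, hau, haw, adj_v⟩ := exists_third hv (p := u) (q := w) huv.symm hadj huw.ne
  obtain ⟨b, hbu, hbv, adj_w⟩ := exists_third hw (p := u) (q := v) huw.symm hadj.symm huv.ne
  refine ⟨v, w, a, b, adj_u, adj_v, adj_w, hau, haw, hbu, hbv, ?_⟩
  rintro rfl
  exact hau (hc a ((adj_v a).2 (by simp)) ((adj_w a).2 (by simp)))

/-- The edge `va` lies in no triangle, so it is oriented. -/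
theorem arc_va (c : RemovableConfig Γ u v w a b) {H : MixedGraph V}
    (hH : H.IsPartialOrientationOf Γ) (hq : H.QuasiTransitive) : H.Arc v a ∨ H.Arc a v := by
  have hva := (hH v a).1 ((c.adj_v a).2 (by simp))
  rcases hva with he | h
  · exfalso
    obtain ⟨z, hz⟩ := hq.2 v a he
    have h1 : Γ.Adj v z := by rw [hH]; tauto
    have h2 : Γ.Adj a z := by rw [hH]; tauto
    rcases (c.adj_v z).1 h1 with rfl | rfl | rfl
    · have := (c.adj_u a).1 h2.symm
      have := (c.adj_v a).2 (by simp)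
      have := this.ne
      have := c.a_ne_w
      tauto
    · have := (c.adj_w a).1 h2.symm
      have := ((c.adj_v a).2 (by simp)).ne
      have := c.a_ne_u
      have := c.a_ne_b
      tauto
    · exact h2.ne rfl
  · exact h

theorem not_adj_au (c : RemovableConfig Γ u v w a b) : ¬ Γ.Adj a u := fun h => by
  have h1 := (c.adj_u a).1 h.symm
  have h2 := ((c.adj_v a).2 (by simp)).ne
  have := c.a_ne_w
  tauto

theorem not_adj_aw (c : RemovableConfig Γ u v w a b) : ¬ Γ.Adj a w := fun h => by
  have h1 := (c.adj_w a).1 h.symm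
  have h2 := ((c.adj_v a).2 (by simp)).ne
  have := c.a_ne_u
  have := c.a_ne_b
  tauto

/-- If `va` points towards `v`, then `wb` points away from `w`. -/
theorem third_arc (c : RemovableConfig Γ u v w a b) {H : MixedGraph V}
    (hH : H.IsPartialOrientationOf Γ) (hq : H.QuasiTransitive) (hav : H.Arc a v) :
    ¬ H.Arc v w ∧ H.Arc w b ∧ ¬ H.Arc b w := by
  have key : ∀ x y z, H.Arc x y → H.Arc y z → Γ.Adj x z := fun x y z h1 h2 =>
    (hH x z).2 (hq.1 x y z h1 h2)
  have nvw : ¬ H.Arc v w := fun h => c.not_adj_aw (key _ _ _ hav h)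
  have nvu : ¬ H.Arc v u := fun h => c.not_adj_au (key _ _ _ hav h)
  have nbw : ¬ H.Arc b w := by
    intro hbw
    have nwv : ¬ H.Arc w v := fun h => c.symm.not_adj_aw (key _ _ _ hbw h)
    have nwu : ¬ H.Arc w u := fun h => c.symm.not_adj_au (key _ _ _ hbw h)
    have he : H.Edge v w := by
      have := (hH v w).1 ((c.adj_v w).2 (by simp))
      tauto
    -- `vw` is undirected, yet its only common neighbour `u` receives no arc from `v` or `w`.
    obtain ⟨z, hz⟩ := hq.2 v w he
    have h1 : Γ.Adj v z := by rw [hH]; tauto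
    have h2 : Γ.Adj w z := by rw [hH]; tauto
    rcases (c.adj_v z).1 h1 with rfl | rfl | rfl
    · tauto
    · exact h2.ne rfl
    · exact c.not_adj_aw h2.symm
  have := c.symm.arc_va hH hq
  tauto

/-- When `a → v`, deleting `u` and making `vw` the arc `w → v` keeps the mixed graph
quasi-transitive, because `w` becomes a source and `v` a sink. -/
theorem delete_of_arc (c : RemovableConfig Γ u v w a b) {H : MixedGraph V}
    (hH : H.IsPartialOrientationOf Γ) (hq : H.QuasiTransitive) (hav : H.Arc a v) :
    ∃ H' : MixedGraph ↥{x : V | x ≠ u},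
      H'.IsPartialOrientationOf (Γ.induce {x : V | x ≠ u}) ∧ H'.QuasiTransitive := by
  obtain ⟨nvw, hwb, nbw⟩ := c.third_arc hH hq hav
  have nva := H.arc_asymm _ _ hav
  have hvw : Γ.Adj v w := (c.adj_v w).2 (by simp)
  have key : ∀ x y, H.Arc x y → Γ.Adj x y := fun x y h => by rw [hH]; tauto
  have v_sink : ∀ x, x ≠ u → ¬ H.Arc v x := by
    intro x hx h
    rcases (c.adj_v x).1 (key _ _ h) with rfl | rfl | rfl <;> tauto
  have w_source : ∀ x, x ≠ u → ¬ H.Arc x w := by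
    intro x hx h
    rcases (c.adj_w x).1 (key _ _ h).symm with rfl | rfl | rfl <;> tauto
  refine ⟨{ Edge := fun x y => H.Edge x y ∧ ¬ (x.1 = v ∧ y.1 = w) ∧ ¬ (x.1 = w ∧ y.1 = v)
            Arc := fun x y => H.Arc x y ∨ (x.1 = w ∧ y.1 = v)
            edge_symm := ?_, edge_irrefl := ?_, arc_irrefl := ?_, arc_asymm := ?_,
            edge_arc_disjoint := ?_ }, ?_, ?_, ?_⟩
  · rintro x y ⟨h, h1, h2⟩
    exact ⟨H.edge_symm _ _ h, by tauto, by tauto⟩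
  · exact fun x h => H.edge_irrefl _ h.1
  · rintro x (h | ⟨h1, h2⟩)
    · exact H.arc_irrefl _ h
    · exact hvw.ne (h2.symm.trans h1)
  · rintro ⟨x, hx⟩ ⟨y, hy⟩ h h'
    have := hvw.ne
    have := H.arc_asymm x y
    grind
  · rintro x y ⟨h, h1, h2⟩ h'
    have := H.edge_arc_disjoint _ _ h
    tauto
  · rintro ⟨x, hx⟩ ⟨y, hy⟩
    have := hH x y
    simp only [SimpleGraph.comap_adj, Function.Embedding.subtype_apply]
    grind [SimpleGraph.Adj.symm]
  · rintro ⟨x, hx⟩ ⟨y, hy⟩ ⟨z, hz⟩ h1 h2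
    have := hq.1 x y z
    have := hvw.ne
    simp only at h1 h2 ⊢
    grind
  · rintro ⟨x, hx⟩ ⟨y, hy⟩ ⟨h, h1, h2⟩
    obtain ⟨z, hz⟩ := hq.2 x y h
    -- Only `v` and `w` are adjacent to `u`, so `u` is no witness for an edge other than `vw`.
    have hzu : z ≠ u := by
      rintro rfl
      have hx' : Γ.Adj z x := by rw [hH]; tauto
      have hy' : Γ.Adj z y := by rw [hH]; tauto
      have := H.edge_irrefl x
      rw [c.adj_u] at hx' hy'
      grind
    exact ⟨⟨z, hzu⟩, by simp only; tauto⟩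

/-- If `w → v` in a quasi-transitive orientation of `Γ - u`, then `w` is a source and `v` a
sink, and the arcs `w → u` and `u → v` can be added. -/
theorem extend_of_arc (c : RemovableConfig Γ u v w a b) {H : MixedGraph ↥{x : V | x ≠ u}}
    (hH : H.IsPartialOrientationOf (Γ.induce {x : V | x ≠ u})) (hq : H.QuasiTransitive)
    (hv : v ≠ u) (hw : w ≠ u) (hwv : H.Arc ⟨w, hw⟩ ⟨v, hv⟩) :
    ∃ H' : MixedGraph V, H'.IsPartialOrientationOf Γ ∧ H'.QuasiTransitive := by
  have hvw : Γ.Adj v w := (c.adj_v w).2 (by simp)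
  have key : ∀ x y, H.Arc x y → Γ.Adj x y := fun x y h => (hH x y).2 (by tauto)
  have key2 : ∀ x y z, H.Arc x y → H.Arc y z → Γ.Adj x z := fun x y z h1 h2 =>
    (hH x z).2 (hq.1 x y z h1 h2)
  have w_source : ∀ x, ¬ H.Arc x ⟨w, hw⟩ := by
    intro x h
    rcases (c.adj_w x).1 (key _ _ h).symm with hx | hx | hx
    · exact x.2 hx
    · exact (key2 _ _ _ h hwv).ne hx
    · have := key2 _ _ _ h hwv
      rw [hx] at this
      exact c.symm.not_adj_aw this
  have v_sink : ∀ x, ¬ H.Arc ⟨v, hv⟩ x := by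
    intro x h
    rcases (c.adj_v x).1 (key _ _ h) with hx | hx | hx
    · exact x.2 hx
    · exact (key2 _ _ _ hwv h).ne hx.symm
    · have := key2 _ _ _ hwv h
      rw [hx] at this
      exact c.not_adj_aw this.symm
  refine ⟨{ Edge := fun x y => ∃ (hx : x ≠ u) (hy : y ≠ u), H.Edge ⟨x, hx⟩ ⟨y, hy⟩
            Arc := fun x y => (∃ (hx : x ≠ u) (hy : y ≠ u), H.Arc ⟨x, hx⟩ ⟨y, hy⟩) ∨
              (x = w ∧ y = u) ∨ (x = u ∧ y = v)
            edge_symm := ?_, edge_irrefl := ?_, arc_irrefl := ?_, arc_asymm := ?_,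
            edge_arc_disjoint := ?_ }, ?_, ?_, ?_⟩
  · rintro x y ⟨hx, hy, h⟩
    exact ⟨hy, hx, H.edge_symm _ _ h⟩
  · rintro x ⟨hx, hy, h⟩
    exact H.edge_irrefl _ h
  · rintro x (⟨hx, hy, h⟩ | ⟨h1, h2⟩ | ⟨h1, h2⟩)
    · exact H.arc_irrefl _ h
    · exact hw (h1.symm.trans h2)
    · exact hv (h2.symm.trans h1)
  · have := hvw.ne
    rintro x y (⟨hx, hy, h⟩ | ⟨h1, h2⟩ | ⟨h1, h2⟩) (⟨hx', hy', h'⟩ | ⟨h1', h2'⟩ | ⟨h1', h2'⟩)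
    · exact H.arc_asymm _ _ h h'
    all_goals grind
  · rintro x y ⟨hx, hy, h⟩ (⟨hx', hy', h'⟩ | ⟨h1', h2'⟩ | ⟨h1', h2'⟩)
    · exact H.edge_arc_disjoint _ _ h h'
    all_goals tauto
  · intro x y
    by_cases hx : x = u
    · subst hx
      rw [c.adj_u]
      simp [hw.symm, hv.symm]
    · by_cases hy : y = u
      · subst hy
        rw [SimpleGraph.adj_comm, c.adj_u]
        simp [hv.symm, hx, or_comm]
      · have := hH ⟨x, hx⟩ ⟨y, hy⟩
        simp only [SimpleGraph.comap_adj, Function.Embedding.subtype_apply] at this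
        rw [this]
        simp [hx, hy]
  · rintro x y z (⟨hx, hy, h⟩ | ⟨rfl, rfl⟩ | ⟨rfl, rfl⟩) (⟨hy', hz, h'⟩ | ⟨h1, rfl⟩ | ⟨h1, rfl⟩)
    · rcases hq.1 _ _ _ h h' with h | h | h
      · exact Or.inl ⟨hx, hz, h⟩
      · exact Or.inr (Or.inl (Or.inl ⟨hx, hz, h⟩))
      · exact Or.inr (Or.inr (Or.inl ⟨hz, hx, h⟩))
    · subst h1; exact (w_source _ h).elim
    · exact (hy h1).elim
    · exact (hy' rfl).elim
    · exact (hw h1.symm).elim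
    · exact Or.inr (Or.inl (Or.inl ⟨hw, hv, hwv⟩))
    · exact (v_sink _ h').elim
    · exact (hvw.ne h1).elim
    · exact (hv h1).elim
  · rintro x y ⟨hx, hy, h⟩
    obtain ⟨z, hz⟩ := hq.2 _ _ h
    exact ⟨z, hz.imp (fun h => ⟨Or.inl ⟨hx, z.2, h.1⟩, Or.inl ⟨z.2, hy, h.2⟩⟩)
      (fun h => ⟨Or.inl ⟨hy, z.2, h.1⟩, Or.inl ⟨z.2, hx, h.2⟩⟩)⟩

/-- After deleting `u`, the edge `vw` lies in no triangle, so it is oriented. -/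
theorem arc_vw (c : RemovableConfig Γ u v w a b) {H : MixedGraph ↥{x : V | x ≠ u}}
    (hH : H.IsPartialOrientationOf (Γ.induce {x : V | x ≠ u})) (hq : H.QuasiTransitive)
    (hv : v ≠ u) (hw : w ≠ u) : H.Arc ⟨v, hv⟩ ⟨w, hw⟩ ∨ H.Arc ⟨w, hw⟩ ⟨v, hv⟩ := by
  rcases (hH ⟨v, hv⟩ ⟨w, hw⟩).1 ((c.adj_v w).2 (by simp)) with he | h
  · exfalso
    obtain ⟨z, hz⟩ := hq.2 _ _ he
    have h1 : Γ.Adj v z := (hH ⟨v, hv⟩ z).2 (by tauto)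
    have h2 : Γ.Adj w z := (hH ⟨w, hw⟩ z).2 (by tauto)
    rcases (c.adj_v z).1 h1 with hz' | hz' | hz'
    · exact z.2 hz'
    · exact h2.ne hz'.symm
    · rw [hz'] at h2
      exact c.not_adj_aw h2.symm
  · exact h

end RemovableConfig

/-- For a graph `Γ` with maximum degree three and a removable vertex `u`, the
graph `Γ` admits a partial orientation as a quasi-transitive mixed graph if and
only if `Γ - u` does. -/
theorem removable_vertex_deletion {V : Type*} [Fintype V] (Γ : SimpleGraph V)
    (hΔ : ∀ v, (Γ.neighborSet v).ncard ≤ 3) (u : V) (hu : Γ.Removable u) :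
    (∃ H : MixedGraph V, H.IsPartialOrientationOf Γ ∧ H.QuasiTransitive) ↔
    (∃ H : MixedGraph ↥{x : V | x ≠ u},
      H.IsPartialOrientationOf (Γ.induce {x : V | x ≠ u}) ∧ H.QuasiTransitive) := by
  obtain ⟨v, w, a, b, c⟩ := RemovableConfig.of_removable hu
  have hv : v ≠ u := ((c.adj_u v).2 (by simp)).ne.symm
  have hw : w ≠ u := ((c.adj_u w).2 (by simp)).ne.symm
  constructor
  · rintro ⟨H, hH, hq⟩
    rcases c.arc_va hH hq with h | h
    · exact c.delete_of_arc hH.rev hq.rev h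
    · exact c.delete_of_arc hH hq h
  · rintro ⟨H, hH, hq⟩
    rcases c.arc_vw hH hq hv hw with h | h
    · exact c.symm.extend_of_arc hH hq hw hv h
    · exact c.extend_of_arc hH hq hv hw h
end

section
/- Let Γ be a simple graph with maximum degree three and let R be the set of removable vertices of Γ. For every u ∈ R, the set of removable vertices of Γ − u is exactly R ∖ {u}. -/
/-- The degree of `v` in `Γ - u` is the number of neighbours of `v` in `Γ` other than `u`. -/
lemma ncard_neighborSet_induce {V : Type*} (Γ : SimpleGraph V) (u : V)
    (v : ↥{x : V | x ≠ u}) :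
    ((Γ.induce {x : V | x ≠ u}).neighborSet v).ncard = (Γ.neighborSet v \ {u}).ncard := by
  rw [← Set.ncard_image_of_injective _ Subtype.val_injective]
  congr 1
  ext x
  simp [SimpleGraph.mem_neighborSet, and_comm]

lemma ncard_neighborSet_induce_of_not_adj {V : Type*} (Γ : SimpleGraph V) (u : V)
    (v : ↥{x : V | x ≠ u}) (h : ¬ Γ.Adj u v) :
    ((Γ.induce {x : V | x ≠ u}).neighborSet v).ncard = (Γ.neighborSet v).ncard := by
  rw [ncard_neighborSet_induce, Set.sdiff_singleton_eq_self]
  exact fun hv => h (Γ.adj_symm hv)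

/-- Under the degree bound, a vertex that still has degree three after the deletion of `u` is not
adjacent to `u`. -/
lemma not_adj_of_ncard_induce {V : Type*} [Fintype V] (Γ : SimpleGraph V)
    (hΔ : ∀ v, (Γ.neighborSet v).ncard ≤ 3) (u : V) (v : ↥{x : V | x ≠ u})
    (h : ((Γ.induce {x : V | x ≠ u}).neighborSet v).ncard = 3) : ¬ Γ.Adj u v := by
  intro ha
  have hm : u ∈ Γ.neighborSet v := Γ.adj_symm ha
  have h1 := Set.ncard_sdiff_singleton_add_one hm (Set.toFinite _)
  rw [ncard_neighborSet_induce] at h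
  have := hΔ v
  omega

/-- Removability is unaffected by deleting a vertex that is neither a neighbour of `w` nor a
neighbour of a neighbour of `w`. -/
lemma removable_induce_iff_of_far {V : Type*} (Γ : SimpleGraph V) (u : V)
    (w : ↥{x : V | x ≠ u}) (hw : ¬ Γ.Adj u w) (hN : ∀ v, Γ.Adj w v → ¬ Γ.Adj u v) :
    (Γ.induce {x : V | x ≠ u}).Removable w ↔ Γ.Removable w := by
  constructor
  · rintro ⟨v, x, hne, hset, hvx, hv, hx, hc⟩
    have hm : ∀ z, (Γ.induce {x : V | x ≠ u}).Adj w z ↔ z = v ∨ z = x := fun z => by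
      simpa using Set.ext_iff.1 hset z
    have hav : Γ.Adj w v := (hm v).2 (Or.inl rfl)
    have hax : Γ.Adj w x := (hm x).2 (Or.inr rfl)
    rw [ncard_neighborSet_induce_of_not_adj _ _ _ (hN _ hav)] at hv
    rw [ncard_neighborSet_induce_of_not_adj _ _ _ (hN _ hax)] at hx
    refine ⟨v, x, fun h => hne (Subtype.ext h), ?_, hvx, hv, hx, ?_⟩
    · ext z
      constructor
      · intro hz
        have hzu : z ≠ u := by
          rintro rfl
          exact hw (Γ.adj_symm hz)
        rcases (hm ⟨z, hzu⟩).1 hz with h | h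
        · exact Or.inl (congrArg Subtype.val h)
        · exact Or.inr (congrArg Subtype.val h)
      · rintro (rfl | rfl)
        · exact hav
        · exact hax
    · intro z hz1 hz2
      have hzu : z ≠ u := by
        rintro rfl
        exact hN _ hav (Γ.adj_symm hz1)
      exact congrArg Subtype.val (hc ⟨z, hzu⟩ hz1 hz2)
  · rintro ⟨v, x, hne, hset, hvx, hv, hx, hc⟩
    have hm : ∀ z, Γ.Adj w z ↔ z = v ∨ z = x := fun z => by
      simpa using Set.ext_iff.1 hset z
    have hav : Γ.Adj w v := (hm v).2 (Or.inl rfl)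
    have hax : Γ.Adj w x := (hm x).2 (Or.inr rfl)
    have hvu : v ≠ u := by
      rintro rfl
      exact hw (Γ.adj_symm hav)
    have hxu : x ≠ u := by
      rintro rfl
      exact hw (Γ.adj_symm hax)
    refine ⟨⟨v, hvu⟩, ⟨x, hxu⟩, fun h => hne (congrArg Subtype.val h), ?_, hvx, ?_, ?_, ?_⟩
    · ext z
      simpa [Subtype.ext_iff] using hm z
    · rw [ncard_neighborSet_induce_of_not_adj _ _ _ (hN _ hav), hv]
    · rw [ncard_neighborSet_induce_of_not_adj _ _ _ (hN _ hax), hx]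
    · exact fun z hz1 hz2 => Subtype.ext (hc z hz1 hz2)

lemma SimpleGraph.Removable.ncard_neighborSet {V : Type*} {Γ : SimpleGraph V} {u : V}
    (hu : Γ.Removable u) : (Γ.neighborSet u).ncard = 2 := by
  obtain ⟨a, b, hab, hset, -⟩ := hu
  rw [hset, Set.ncard_pair hab]

/-- Around a neighbour `a` of a removable vertex `u`: `a` has degree three, and some further
neighbour `b` of `a` is adjacent to `u`, has degree three, and shares only `u` with `a`. -/
lemma SimpleGraph.Removable.exists_other {V : Type*} {Γ : SimpleGraph V} {u a : V}
    (hu : Γ.Removable u) (ha : Γ.Adj u a) :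
    (Γ.neighborSet a).ncard = 3 ∧ ∃ b, Γ.Adj u b ∧ Γ.Adj a b ∧ (Γ.neighborSet b).ncard = 3 ∧
      ∀ z, Γ.Adj a z → Γ.Adj b z → z = u := by
  obtain ⟨v, w, hvw, hset, hadj, hv, hw, hc⟩ := hu
  have hm : ∀ z, Γ.Adj u z ↔ z = v ∨ z = w := fun z => by
    simpa using Set.ext_iff.1 hset z
  rcases (hm a).1 ha with rfl | rfl
  · exact ⟨hv, w, (hm w).2 (Or.inr rfl), hadj, hw, hc⟩
  · exact ⟨hw, v, (hm v).2 (Or.inl rfl), hadj.symm, hv, fun z h1 h2 => hc z h2 h1⟩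

/-- Distinct removable vertices are at distance greater than two. -/
lemma SimpleGraph.Removable.far {V : Type*} {Γ : SimpleGraph V} {u w : V}
    (hu : Γ.Removable u) (hw : Γ.Removable w) (hne : w ≠ u) :
    ¬ Γ.Adj u w ∧ ∀ v, Γ.Adj w v → ¬ Γ.Adj u v := by
  have hwu : ¬ Γ.Adj u w := fun h => by
    have h1 := (SimpleGraph.Removable.exists_other hu h).1
    have h2 := SimpleGraph.Removable.ncard_neighborSet hw
    omega
  refine ⟨hwu, fun a hwa hua => ?_⟩
  obtain ⟨ha3, b, hub, hab, hb3, hc⟩ := SimpleGraph.Removable.exists_other hu hua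
  obtain ⟨-, x, hwx, hax, -, -⟩ := SimpleGraph.Removable.exists_other hw hwa
  obtain ⟨p, q, r, -, -, -, hset⟩ := Set.ncard_eq_three.1 ha3
  have hm : ∀ z, Γ.Adj a z → z = p ∨ z = q ∨ z = r := fun z hz => by
    simpa using (Set.ext_iff.1 hset z).1 hz
  have hbu : b ≠ u := hub.ne'
  have hxu : x ≠ u := by
    rintro rfl
    exact hwu hwx.symm
  have hbw : b ≠ w := by
    rintro rfl
    exact hwu hub
  have hxw : x ≠ w := hwx.symm.ne
  -- The vertices `u, w, b, x` lie in a three-element set and only `b` and `x` can coincide.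
  have hbx : b = x := by
    have h1 := hm u hua.symm
    have h2 := hm w hwa.symm
    have h3 := hm b hab
    have h4 := hm x hax
    grind
  subst hbx
  exact hne (hc w hwa.symm hwx.symm)

/-- A vertex removable in `Γ - u` is at distance greater than two from `u` in `Γ`. -/
lemma SimpleGraph.Removable.far_of_induce {V : Type*} [Fintype V] {Γ : SimpleGraph V}
    (hΔ : ∀ v, (Γ.neighborSet v).ncard ≤ 3) {u : V} (hu : Γ.Removable u)
    {w : ↥{x : V | x ≠ u}} (hw : (Γ.induce {x : V | x ≠ u}).Removable w) :
    ¬ Γ.Adj u w ∧ ∀ v, Γ.Adj w v → ¬ Γ.Adj u v := by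
  have key : ∀ v, v ≠ u → Γ.Adj w v → ¬ Γ.Adj u v := fun v hv hwv =>
    not_adj_of_ncard_induce Γ hΔ u ⟨v, hv⟩
      (SimpleGraph.Removable.exists_other hw (a := ⟨v, hv⟩)
        (SimpleGraph.induce_adj.2 hwv)).1
  refine ⟨fun h => ?_, fun v hwv huv => key v huv.ne' hwv huv⟩
  obtain ⟨-, b, hub, hab, -⟩ := SimpleGraph.Removable.exists_other hu h
  exact key b hub.ne' hab hub

/-- If `Γ` has maximum degree three, `R` is its set of removable vertices and
`u ∈ R`, then the set of removable vertices of `Γ - u` is exactly `R \ {u}`. -/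
theorem removable_set_after_deletion {V : Type*} [Fintype V] (Γ : SimpleGraph V)
    (hΔ : ∀ v, (Γ.neighborSet v).ncard ≤ 3)
    (R : Set V) (hR : R = {x : V | Γ.Removable x}) (u : V) (hu : u ∈ R) :
    ∀ w : ↥{x : V | x ≠ u},
      (Γ.induce {x : V | x ≠ u}).Removable w ↔ (w : V) ∈ R \ {u} := by
  subst hR
  intro w
  constructor
  · intro hw
    obtain ⟨h1, h2⟩ := SimpleGraph.Removable.far_of_induce hΔ hu hw
    exact ⟨(removable_induce_iff_of_far Γ u w h1 h2).1 hw, w.2⟩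
  · rintro ⟨hw, hne⟩
    obtain ⟨h1, h2⟩ := SimpleGraph.Removable.far hu hw hne
    exact (removable_induce_iff_of_far Γ u w h1 h2).2 hw
end

section
/- Let Γ be a simple graph with maximum degree three and let R be the set of removable vertices of Γ. Then Γ admits a partial orientation as a quasi-transitive mixed graph if and only if Γ − R admits a partial orientation as a quasi-transitive mixed graph. -/
/-! ### Ears at removable vertices -/

/-- `u` is a removable vertex whose neighbours are exactly `v` and `w`, recorded in terms of
adjacency: `u` is the apex of the only triangle on the edge `vw`, whose ends are not removable. -/
structure SimpleGraph.IsEar {V : Type*} (Γ : SimpleGraph V) (u v w : V) : Prop where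
  rem : Γ.Removable u
  left : ¬ Γ.Removable v
  right : ¬ Γ.Removable w
  adj_left : Γ.Adj u v
  adj_right : Γ.Adj u w
  adj : Γ.Adj v w
  nbr : ∀ z, Γ.Adj u z → z = v ∨ z = w
  apex : ∀ z, Γ.Adj v z → Γ.Adj w z → z = u

namespace SimpleGraph.IsEar

variable {V : Type*} {Γ : SimpleGraph V}

theorem symm {u v w : V} (h : Γ.IsEar u v w) : Γ.IsEar u w v :=
  ⟨h.rem, h.right, h.left, h.adj_right, h.adj_left, h.adj.symm,
    fun z hz => (h.nbr z hz).symm, fun z hw hv => h.apex z hv hw⟩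

end SimpleGraph.IsEar

theorem SimpleGraph.Removable.ncard_eq_two {V : Type*} {Γ : SimpleGraph V} {u : V}
    (h : Γ.Removable u) : (Γ.neighborSet u).ncard = 2 := by
  obtain ⟨v, w, hvw, hN, -⟩ := h
  rw [hN, Set.ncard_pair hvw]

theorem SimpleGraph.Removable.exists_isEar {V : Type*} {Γ : SimpleGraph V} {u : V}
    (h : Γ.Removable u) : ∃ v w, Γ.IsEar u v w := by
  obtain ⟨v, w, hvw, hN, hadj, hv, hw, hz⟩ := id h
  have hN' : ∀ z, Γ.Adj u z ↔ z = v ∨ z = w := fun z => by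
    rw [← SimpleGraph.mem_neighborSet, hN]; simp
  exact ⟨v, w, h, fun h' => by simp [h'.ncard_eq_two] at hv,
    fun h' => by simp [h'.ncard_eq_two] at hw, (hN' v).2 (.inl rfl), (hN' w).2 (.inr rfl), hadj,
    fun z => (hN' z).1, hz⟩

namespace MixedGraph

/-- Two consecutive arcs cannot close up to a 2-cycle, so quasi-transitivity makes their ends
adjacent in the underlying graph. -/
theorem adj_of_dipath {V : Type*} {Γ : SimpleGraph V} {H : MixedGraph V}
    (hO : H.IsPartialOrientationOf Γ) (hQ : H.QuasiTransitive) {x y z : V}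
    (hxy : H.Arc x y) (hyz : H.Arc y z) : Γ.Adj x z :=
  (hO x z).2 (hQ.1 x y z hxy hyz)

/-! ### Deleting the removable vertices -/

/-- The mixed graph on the non-removable vertices obtained from `H` by restriction, where every
undirected edge `xy` carrying a dipath `x → u → y` through a removable `u` becomes the arc
`x → y`. -/
def deleteEars {V : Type*} {Γ : SimpleGraph V} (H : MixedGraph V) :
    MixedGraph ↥{x : V | ¬ Γ.Removable x} where
  Edge x y := H.Edge x y ∧ ¬ (∃ u, Γ.IsEar u x y ∧ (H.Arc x u ∧ H.Arc u y ∨ H.Arc y u ∧ H.Arc u x))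
  Arc x y := H.Arc x y ∨ H.Edge x y ∧ ∃ u, Γ.IsEar u x y ∧ H.Arc x u ∧ H.Arc u y
  edge_symm := fun u v ⟨h, h'⟩ => ⟨H.edge_symm _ _ h,
    fun ⟨z, hz, hz'⟩ => h' ⟨z, hz.symm, hz'.symm⟩⟩
  edge_irrefl v h := H.edge_irrefl _ h.1
  arc_irrefl := by
    rintro v (h | ⟨h, -⟩)
    exacts [H.arc_irrefl _ h, H.edge_irrefl _ h]
  arc_asymm := by
    rintro x y (h | ⟨h, u, hu, h1, h2⟩) (h' | ⟨h', u', hu', h1', h2'⟩)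
    · exact H.arc_asymm _ _ h h'
    · exact H.edge_arc_disjoint _ _ (H.edge_symm _ _ h') h
    · exact H.edge_arc_disjoint _ _ (H.edge_symm _ _ h) h'
    · obtain rfl := hu.apex u' hu'.adj_right.symm hu'.adj_left.symm
      exact H.arc_asymm _ _ h1 h2'
  edge_arc_disjoint := by
    rintro x y ⟨h, h'⟩ (h1 | ⟨-, u, hu, h1⟩)
    exacts [H.edge_arc_disjoint _ _ h h1, h' ⟨u, hu, .inl h1⟩]

section Delete

variable {V : Type*} {Γ : SimpleGraph V} {H : MixedGraph V}

theorem deleteEars_isPartialOrientationOf (hO : H.IsPartialOrientationOf Γ) :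
    (H.deleteEars (Γ := Γ)).IsPartialOrientationOf (Γ.induce {x : V | ¬ Γ.Removable x}) := by
  intro x y
  rw [SimpleGraph.comap_adj]
  refine (hO x y).trans ⟨?_, ?_⟩
  · rintro (h | h | h)
    · by_cases hu : ∃ u, Γ.IsEar u x y ∧ (H.Arc x u ∧ H.Arc u y ∨ H.Arc y u ∧ H.Arc u x)
      · obtain ⟨u, hu, h' | h'⟩ := hu
        · exact .inr (.inl (.inr ⟨h, u, hu, h'⟩))
        · exact .inr (.inr (.inr ⟨H.edge_symm _ _ h, u, hu.symm, h'⟩))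
      · exact .inl ⟨h, hu⟩
    · exact .inr (.inl (.inl h))
    · exact .inr (.inr (.inl h))
  · rintro (h | (h | ⟨h, -⟩) | (h | ⟨h, -⟩))
    · exact .inl h.1
    · exact .inr (.inl h)
    · exact .inl h
    · exact .inr (.inr h)
    · exact .inl (H.edge_symm _ _ h)

theorem deleteEars_quasiTransitive (hO : H.IsPartialOrientationOf Γ) (hQ : H.QuasiTransitive) :
    (H.deleteEars (Γ := Γ)).QuasiTransitive := by
  refine ⟨fun x y z hxy hyz => ?_, fun x y => ?_⟩
  · rw [← deleteEars_isPartialOrientationOf hO x z, SimpleGraph.comap_adj]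
    -- A new arc lies on no 2-dipath, so both arcs come from `H`.
    rcases hxy with h | ⟨h, u, hu, h1, h2⟩ <;> rcases hyz with h' | ⟨h', u', hu', h1', h2'⟩
    · exact adj_of_dipath hO hQ h h'
    · rcases hu'.nbr _ (adj_of_dipath hO hQ h h1').symm with e | e
      · rw [e] at h
        exact (H.arc_irrefl _ h).elim
      · rw [e] at h
        exact (H.edge_arc_disjoint _ _ (H.edge_symm _ _ h') h).elim
    · rcases hu.nbr _ (adj_of_dipath hO hQ h2 h') with e | e
      · rw [e] at h'
        exact (H.edge_arc_disjoint _ _ (H.edge_symm _ _ h) h').elim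
      · rw [e] at h'
        exact (H.arc_irrefl _ h').elim
    · rcases hu.nbr _ (adj_of_dipath hO hQ h2 h1') with e | e
      · exact (x.2 (e ▸ hu'.rem)).elim
      · exact (y.2 (e ▸ hu'.rem)).elim
  · rintro ⟨h, hn⟩
    obtain ⟨z, hz⟩ := hQ.2 x y h
    have hxz : Γ.Adj z x := (hO _ _).2 (by tauto)
    have hyz : Γ.Adj z y := (hO _ _).2 (by tauto)
    by_cases hr : Γ.Removable z
    · exfalso
      obtain ⟨v, w, hE⟩ := hr.exists_isEar
      have hxy : Γ.Adj x y := (hO _ _).2 (.inl h)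
      -- `x` and `y` are distinct neighbours of the degree-two vertex `z`.
      have hE' : Γ.IsEar z x y := by
        rcases hE.nbr _ hxz with e | e <;> rcases hE.nbr _ hyz with e' | e'
        · exact (hxy.ne (e.trans e'.symm)).elim
        · rw [e, e']; exact hE
        · rw [e, e']; exact hE.symm
        · exact (hxy.ne (e.trans e'.symm)).elim
      exact hn ⟨z, hE', hz⟩
    · exact ⟨⟨z, hr⟩, hz.imp (fun h => ⟨.inl h.1, .inl h.2⟩) (fun h => ⟨.inl h.1, .inl h.2⟩)⟩

end Delete

/-! ### Restoring the removable vertices -/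

section Restore

variable {V : Type*} {Γ : SimpleGraph V} {H : MixedGraph ↥{x : V | ¬ Γ.Removable x}}

/-- The arc relation of a mixed graph on the non-removable vertices, viewed on all vertices. -/
def ArcOn (H : MixedGraph ↥{x : V | ¬ Γ.Removable x}) (x y : V) : Prop :=
  ∃ hx hy, H.Arc ⟨x, hx⟩ ⟨y, hy⟩

/-- The undirected-edge relation of a mixed graph on the non-removable vertices, viewed on all
vertices. -/
def EdgeOn (H : MixedGraph ↥{x : V | ¬ Γ.Removable x}) (x y : V) : Prop :=
  ∃ hx hy, H.Edge ⟨x, hx⟩ ⟨y, hy⟩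

theorem ArcOn.adj (hO : H.IsPartialOrientationOf (Γ.induce {x : V | ¬ Γ.Removable x})) {x y : V}
    (h : H.ArcOn x y) : Γ.Adj x y := by
  obtain ⟨hx, hy, h⟩ := h
  exact (hO ⟨x, hx⟩ ⟨y, hy⟩).2 (.inr (.inl h))

theorem ArcOn.dipath (hO : H.IsPartialOrientationOf (Γ.induce {x : V | ¬ Γ.Removable x}))
    (hQ : H.QuasiTransitive) {x y z : V} (h : H.ArcOn x y) (h' : H.ArcOn y z) : Γ.Adj x z := by
  obtain ⟨hx, hy, h⟩ := h
  obtain ⟨_, hz, h'⟩ := h'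
  exact adj_of_dipath hO hQ h h'

/-- The base `vw` of an ear lies in no triangle of `Γ - R`, so it cannot be undirected. -/
theorem arcOn_or_arcOn (hO : H.IsPartialOrientationOf (Γ.induce {x : V | ¬ Γ.Removable x}))
    (hQ : H.QuasiTransitive) {u v w : V} (hE : Γ.IsEar u v w) : H.ArcOn v w ∨ H.ArcOn w v := by
  rcases (hO ⟨v, hE.left⟩ ⟨w, hE.right⟩).1 hE.adj with h | h | h
  · obtain ⟨⟨z, hz⟩, h'⟩ := hQ.2 _ _ h
    have hv : Γ.Adj v z := (hO ⟨v, hE.left⟩ ⟨z, hz⟩).2 (by tauto)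
    have hw : Γ.Adj w z := (hO ⟨w, hE.right⟩ ⟨z, hz⟩).2 (by tauto)
    exact (hz (hE.apex z hv hw ▸ hE.rem)).elim
  · exact .inl ⟨_, _, h⟩
  · exact .inr ⟨_, _, h⟩

/-- If the base of an ear is oriented `v → w`, then `v` is a source of `Γ - R`. -/
theorem not_arcOn_left (hO : H.IsPartialOrientationOf (Γ.induce {x : V | ¬ Γ.Removable x}))
    (hQ : H.QuasiTransitive) {u v w : V} (hE : Γ.IsEar u v w) (h : H.ArcOn v w) (x : V) :
    ¬ H.ArcOn x v := fun hx => by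
  obtain rfl := hE.apex x (hx.adj hO).symm (hx.dipath hO hQ h).symm
  exact hx.1 hE.rem

/-- If the base of an ear is oriented `v → w`, then `w` is a sink of `Γ - R`. -/
theorem not_arcOn_right (hO : H.IsPartialOrientationOf (Γ.induce {x : V | ¬ Γ.Removable x}))
    (hQ : H.QuasiTransitive) {u v w : V} (hE : Γ.IsEar u v w) (h : H.ArcOn v w) (x : V) :
    ¬ H.ArcOn w x := fun hx => by
  obtain rfl := hE.apex x (h.dipath hO hQ hx) (hx.adj hO)
  exact hx.2.1 hE.rem

/-- The mixed graph obtained from `H` by restoring every removable vertex `u`, with arcs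
`v → u → w` when the edge joining the neighbours of `u` is oriented `v → w` in `H`. -/
def restoreEars (H : MixedGraph ↥{x : V | ¬ Γ.Removable x})
    (hO : H.IsPartialOrientationOf (Γ.induce {x : V | ¬ Γ.Removable x}))
    (hQ : H.QuasiTransitive) : MixedGraph V where
  Edge := H.EdgeOn
  Arc x y := H.ArcOn x y ∨ (∃ w, Γ.IsEar y x w ∧ H.ArcOn x w) ∨ (∃ v, Γ.IsEar x v y ∧ H.ArcOn v y)
  edge_symm := fun _ _ ⟨hx, hy, h⟩ => ⟨hy, hx, H.edge_symm _ _ h⟩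
  edge_irrefl := fun _ ⟨_, _, h⟩ => H.edge_irrefl _ h
  arc_irrefl := by
    rintro x (h | ⟨w, h, -⟩ | ⟨v, h, -⟩)
    exacts [(h.adj hO).ne rfl, h.left h.rem, h.right h.rem]
  arc_asymm := by
    rintro x y (h | ⟨w, h, ha⟩ | ⟨v, h, ha⟩) (h' | ⟨w', h', ha'⟩ | ⟨v', h', ha'⟩)
    · exact H.arc_asymm _ _ h.2.2 h'.2.2
    · exact h.1 h'.rem
    · exact h.2.1 h'.rem
    · exact h'.1 h.rem
    · exact h.left h'.rem
    · exact not_arcOn_left hO hQ h ha _ ha'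
    · exact h'.2.1 h.rem
    · exact not_arcOn_right hO hQ h ha _ ha'
    · exact h.right h'.rem
  edge_arc_disjoint := by
    rintro x y ⟨hx, hy, h⟩ (h' | ⟨w, h', -⟩ | ⟨v, h', -⟩)
    exacts [H.edge_arc_disjoint _ _ h h'.2.2, hy h'.rem, hx h'.rem]

theorem restoreEars_isPartialOrientationOf
    (hO : H.IsPartialOrientationOf (Γ.induce {x : V | ¬ Γ.Removable x}))
    (hQ : H.QuasiTransitive) : (H.restoreEars hO hQ).IsPartialOrientationOf Γ := by
  have key : ∀ x y, Γ.Removable x → Γ.Adj x y →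
      (H.restoreEars hO hQ).Arc x y ∨ (H.restoreEars hO hQ).Arc y x := by
    intro x y hx hxy
    obtain ⟨v, w, hE⟩ := hx.exists_isEar
    obtain ⟨z, hE⟩ : ∃ z, Γ.IsEar x y z := by
      rcases hE.nbr y hxy with rfl | rfl
      exacts [⟨w, hE⟩, ⟨v, hE.symm⟩]
    rcases arcOn_or_arcOn hO hQ hE with h | h
    · exact .inr (.inr (.inl ⟨z, hE, h⟩))
    · exact .inl (.inr (.inr ⟨z, hE.symm, h⟩))
  have arc : ∀ x y, (H.restoreEars hO hQ).Arc x y → Γ.Adj x y := by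
    rintro x y (h | ⟨w, h, -⟩ | ⟨v, h, -⟩)
    exacts [h.adj hO, h.adj_left.symm, h.adj_right]
  refine fun x y => ⟨fun h => ?_, ?_⟩
  · by_cases hx : Γ.Removable x
    · exact .inr (key x y hx h)
    by_cases hy : Γ.Removable y
    · exact .inr (key y x hy h.symm).symm
    exact ((hO ⟨x, hx⟩ ⟨y, hy⟩).1 h).imp (fun h => ⟨hx, hy, h⟩)
      (Or.imp (fun h => .inl ⟨hx, hy, h⟩) (fun h => .inl ⟨hy, hx, h⟩))
  · rintro (⟨hx, hy, h⟩ | h | h)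
    · exact (hO ⟨x, hx⟩ ⟨y, hy⟩).2 (.inl h)
    · exact arc _ _ h
    · exact (arc _ _ h).symm

theorem restoreEars_quasiTransitive
    (hO : H.IsPartialOrientationOf (Γ.induce {x : V | ¬ Γ.Removable x}))
    (hQ : H.QuasiTransitive) : (H.restoreEars hO hQ).QuasiTransitive := by
  refine ⟨fun x y z hxy hyz => ?_, ?_⟩
  · rw [← restoreEars_isPartialOrientationOf hO hQ x z]
    rcases hxy with h | ⟨w, h, ha⟩ | ⟨v, h, ha⟩ <;>
      rcases hyz with h' | ⟨w', h', ha'⟩ | ⟨v', h', ha'⟩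
    · exact h.dipath hO hQ h'
    · exact (not_arcOn_left hO hQ h' ha' _ h).elim
    · exact (h.2.1 h'.rem).elim
    · exact (h'.1 h.rem).elim
    · exact (h'.left h.rem).elim
    · -- The dipath `x → y → z` passes through a removable `y`, whose neighbours are `x` and `w`.
      rcases h.nbr z h'.adj_right with rfl | rfl
      · exact (not_arcOn_left hO hQ h ha _ ha').elim
      · exact h.adj
    · exact (not_arcOn_right hO hQ h ha _ h').elim
    · exact (not_arcOn_right hO hQ h ha _ ha').elim
    · exact (h.right h'.rem).elim
  · rintro x y ⟨hx, hy, h⟩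
    obtain ⟨⟨z, hz⟩, h'⟩ := hQ.2 _ _ h
    exact ⟨z, h'.imp (fun h => ⟨.inl ⟨_, _, h.1⟩, .inl ⟨_, _, h.2⟩⟩)
      (fun h => ⟨.inl ⟨_, _, h.1⟩, .inl ⟨_, _, h.2⟩⟩)⟩

end Restore

end MixedGraph

/-- For a graph `Γ` with maximum degree three and set `R` of removable
vertices, `Γ` admits a partial orientation as a quasi-transitive mixed graph if
and only if `Γ - R` does. -/
theorem removable_set_deletion {V : Type*} [Fintype V] (Γ : SimpleGraph V)
    (hΔ : ∀ v, (Γ.neighborSet v).ncard ≤ 3) :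
    (∃ H : MixedGraph V, H.IsPartialOrientationOf Γ ∧ H.QuasiTransitive) ↔
    (∃ H : MixedGraph ↥{x : V | ¬ Γ.Removable x},
      H.IsPartialOrientationOf (Γ.induce {x : V | ¬ Γ.Removable x}) ∧
      H.QuasiTransitive) := by
  exact ⟨fun ⟨_, hO, hQ⟩ => ⟨_, MixedGraph.deleteEars_isPartialOrientationOf hO,
      MixedGraph.deleteEars_quasiTransitive hO hQ⟩,
    fun ⟨_, hO, hQ⟩ => ⟨_, MixedGraph.restoreEars_isPartialOrientationOf hO hQ,
      MixedGraph.restoreEars_quasiTransitive hO hQ⟩⟩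
end

section
/- Let Γ be a simple graph with maximum degree three. If Γ contains Π as a subgraph, then Γ does not admit a partial orientation as a quasi-transitive mixed graph. -/
/-- `Γ` contains a copy of `Π` (a triangle `uvw` together with pendant edges
`uu'`, `vv'`, `ww'` on six distinct vertices) as a subgraph. -/
def SimpleGraph.ContainsPi {V : Type*} (Γ : SimpleGraph V) : Prop :=
  ∃ u v w u' v' w' : V, ([u, v, w, u', v', w'] : List V).Nodup ∧
    Γ.Adj u v ∧ Γ.Adj v w ∧ Γ.Adj u w ∧ Γ.Adj u u' ∧ Γ.Adj v v' ∧ Γ.Adj w w'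

/-- A vertex of degree at most three has no neighbours besides three given distinct ones. -/
theorem eq_of_adj_of_ncard_le_three {V : Type*} [Fintype V] {Γ : SimpleGraph V} {u a b c x : V}
    (hΔ : (Γ.neighborSet u).ncard ≤ 3) (hab : a ≠ b) (hac : a ≠ c) (hbc : b ≠ c)
    (ha : Γ.Adj u a) (hb : Γ.Adj u b) (hc : Γ.Adj u c) (hx : Γ.Adj u x) :
    x = a ∨ x = b ∨ x = c := by
  have hsub : ({a, b, c} : Set V) ⊆ Γ.neighborSet u := by
    rintro y (rfl | rfl | rfl) <;> assumption
  have hcard : ({a, b, c} : Set V).ncard = 3 := Set.ncard_eq_three.2 ⟨a, b, c, hab, hac, hbc, rfl⟩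
  have heq := Set.eq_of_subset_of_ncard_le hsub (hΔ.trans hcard.ge) (Set.toFinite _)
  have hmem : x ∈ ({a, b, c} : Set V) := heq ▸ hx
  simpa using hmem

/-- If `p` is a neighbour of `u` adjacent to no other neighbour of `u`, then `up` must be an arc,
and its direction is shared by all arcs at `u`. -/
theorem isSource_or_isSink_of_pendant {V : Type*} {Γ : SimpleGraph V} {H : MixedGraph V}
    (hO : H.IsPartialOrientationOf Γ) (hQ : H.QuasiTransitive) {u p : V} (hup : Γ.Adj u p)
    (hp : ∀ x, Γ.Adj u x → ¬ Γ.Adj p x) : H.IsSource u ∨ H.IsSink u := by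
  have hp' : ∀ x, Γ.Adj u x → ¬ Γ.Adj x p := fun x h h' => hp x h h'.symm
  rcases (hO u p).1 hup with h | h | h
  · obtain ⟨x, ⟨h1, h2⟩ | ⟨h1, h2⟩⟩ := hQ.2 u p h
    · exact absurd ((hO p x).2 (.inr (.inr h2))) (hp x ((hO u x).2 (.inr (.inl h1))))
    · exact absurd ((hO p x).2 (.inr (.inl h1))) (hp x ((hO u x).2 (.inr (.inr h2))))
  · exact .inl fun x hx => hp' x ((hO u x).2 (.inr (.inr hx))) ((hO x p).2 (hQ.1 x u p hx h))
  · exact .inr fun x hx => hp x ((hO u x).2 (.inr (.inl hx))) ((hO p x).2 (hQ.1 p u x h hx))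

/-- An edge whose ends have a source or sink `w` as their only common neighbour is an arc. -/
theorem arc_or_arc_of_triangle {V : Type*} {Γ : SimpleGraph V} {H : MixedGraph V}
    (hO : H.IsPartialOrientationOf Γ) (hQ : H.QuasiTransitive) {u v w : V} (huv : Γ.Adj u v)
    (hw : ∀ x, Γ.Adj u x → Γ.Adj v x → x = w) (hs : H.IsSource w ∨ H.IsSink w) :
    H.Arc u v ∨ H.Arc v u := by
  refine ((hO u v).1 huv).resolve_left fun h => ?_
  obtain ⟨x, ⟨h1, h2⟩ | ⟨h1, h2⟩⟩ := hQ.2 u v h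
  · obtain rfl := hw x ((hO u x).2 (.inr (.inl h1))) ((hO v x).2 (.inr (.inr h2)))
    exact hs.elim (fun hs => hs _ h1) (fun hs => hs _ h2)
  · obtain rfl := hw x ((hO u x).2 (.inr (.inr h2))) ((hO v x).2 (.inr (.inl h1)))
    exact hs.elim (fun hs => hs _ h1) (fun hs => hs _ h2)

/-- A graph with maximum degree three containing `Π` as a subgraph admits no
partial orientation as a quasi-transitive mixed graph. -/
theorem containsPi_not_quasiTransitive {V : Type*} [Fintype V] (Γ : SimpleGraph V)
    (hΔ : ∀ v, (Γ.neighborSet v).ncard ≤ 3) (hPi : Γ.ContainsPi) :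
    ¬ ∃ H : MixedGraph V, H.IsPartialOrientationOf Γ ∧ H.QuasiTransitive := by
  rintro ⟨H, hO, hQ⟩
  obtain ⟨u, v, w, u', v', w', hnd, huv, hvw, huw, huu, hvv, hww⟩ := hPi
  simp only [List.nodup_cons, List.mem_cons, List.not_mem_nil, or_false, not_or] at hnd
  have hNu : ∀ x, Γ.Adj u x → x = v ∨ x = w ∨ x = u' := fun x =>
    eq_of_adj_of_ncard_le_three (hΔ u) (by grind) (by grind) (by grind) huv huw huu
  have hNv : ∀ x, Γ.Adj v x → x = u ∨ x = w ∨ x = v' := fun x =>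
    eq_of_adj_of_ncard_le_three (hΔ v) (by grind) (by grind) (by grind) huv.symm hvw hvv
  have hNw : ∀ x, Γ.Adj w x → x = u ∨ x = v ∨ x = w' := fun x =>
    eq_of_adj_of_ncard_le_three (hΔ w) (by grind) (by grind) (by grind) huw.symm hvw.symm hww
  have hirr : ∀ x, ¬ Γ.Adj x x := fun x => Γ.irrefl
  have hsymm : ∀ x y, Γ.Adj x y → Γ.Adj y x := fun x y h => h.symm
  have su := isSource_or_isSink_of_pendant hO hQ huu (by grind)
  have sv := isSource_or_isSink_of_pendant hO hQ hvv (by grind)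
  have sw := isSource_or_isSink_of_pendant hO hQ hww (by grind)
  have auv := arc_or_arc_of_triangle hO hQ huv (w := w) (by grind) sw
  have avw := arc_or_arc_of_triangle hO hQ hvw (w := u) (by grind) su
  have auw := arc_or_arc_of_triangle hO hQ huw (w := v) (by grind) sv
  -- Two of the three vertices are both sources or both sinks, yet an arc joins them.
  grind [MixedGraph.IsSource, MixedGraph.IsSink]
end

section
/- Let Y = (L, C) be an instance of Monotone NAE3SAT with clauses c₁,…,c_m, and let Γ_Y be the associated graph. In every partial orientation G of Γ_Y as a quasi-transitive mixed graph, for each variable x ∈ L: (1) every edge of the path P_x is oriented as an arc and P_x is oriented as an alternating directed path (every vertex of P_x is a source or a sink of G); and (2) for every k with 1 ≤ k ≤ m, the vertex x_{2k} is a source in G if and only if x₀ is a source in G. -/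
/-- The clause graph `Σ` on vertices `{0,…,8}`; its literal vertices are
`u = 1`, `v = 7` and `w = 4`. -/
def clauseGraph : SimpleGraph (Fin 9) :=
  SimpleGraph.fromEdgeSet
    {s(0,1), s(1,2), s(2,3), s(3,4), s(4,5), s(1,6), s(2,6), s(3,6), s(4,6),
      s(2,7), s(3,7), s(6,7), s(7,8)}

/-- The vertex set of `Γ_Y`: a path vertex `xⱼ` for each variable `x` and each
`j ∈ {0, …, 2m+2}`, together with, for each clause, the vertices of its clause
graph other than the literal vertices `1`, `4`, `7`. -/
abbrev GammaVertex (L : Type*) (m : ℕ) : Type _ :=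
  (L × Fin (2*m+3)) ⊕ (Fin m × {i : Fin 9 // i ≠ 1 ∧ i ≠ 4 ∧ i ≠ 7})

/-- The vertex of `Γ_Y` corresponding to vertex `i` of the clause graph of the
`k`-th clause: the literal vertices `1`, `7`, `4` are identified with the path
vertices `u_{2(k+1)}`, `v_{2(k+1)}`, `w_{2(k+1)}` of the paths of the three
variables `(u, v, w)` of the clause (clauses indexed from `0`). -/
def clauseVertex {L : Type*} {m : ℕ} (C : Fin m → L × L × L) (k : Fin m)
    (i : Fin 9) : GammaVertex L m :=
  if h1 : i = 1 then Sum.inl ((C k).1, ⟨2*(k.1+1), by have := k.isLt; omega⟩)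
  else if h7 : i = 7 then Sum.inl ((C k).2.1, ⟨2*(k.1+1), by have := k.isLt; omega⟩)
  else if h4 : i = 4 then Sum.inl ((C k).2.2, ⟨2*(k.1+1), by have := k.isLt; omega⟩)
  else Sum.inr (k, ⟨i, h1, h4, h7⟩)

/-- The graph `Γ_Y` associated to an instance of Monotone NAE3SAT with clauses
`C`: the disjoint union of a path `P_x` on vertices `x₀, …, x_{2m+2}` for each
variable `x` and a copy of the clause graph for each clause, with the literal
vertices of each clause graph identified with the corresponding path
vertices. -/
def gammaGraph {L : Type*} {m : ℕ} (C : Fin m → L × L × L) :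
    SimpleGraph (GammaVertex L m) :=
  SimpleGraph.fromRel (fun a b =>
    (∃ (x : L) (j : Fin (2*m+3)) (hj : (j : ℕ) + 1 < 2*m+3),
        a = Sum.inl (x, j) ∧ b = Sum.inl (x, ⟨(j : ℕ) + 1, hj⟩)) ∨
    (∃ (k : Fin m) (i i' : Fin 9), clauseGraph.Adj i i' ∧
        a = clauseVertex C k i ∧ b = clauseVertex C k i'))

/-- Only the literal vertices `1`, `4`, `7` are glued to path vertices, and these have even
index. -/
lemma clauseVertex_eq_inl {L : Type*} {m : ℕ} {C : Fin m → L × L × L} {k : Fin m} {i : Fin 9}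
    {x : L} {j : Fin (2*m+3)} (h : clauseVertex C k i = Sum.inl (x, j)) :
    (i = 1 ∨ i = 4 ∨ i = 7) ∧ (j : ℕ) % 2 = 0 := by
  unfold clauseVertex at h
  split_ifs at h with h1 h7 h4
  all_goals
    simp only [Sum.inl.injEq, Prod.mk.injEq, Fin.ext_iff] at h
    refine ⟨by tauto, by omega⟩

lemma clauseGraph_literals_not_adj {i i' : Fin 9} (hi : i = 1 ∨ i = 4 ∨ i = 7)
    (hi' : i' = 1 ∨ i' = 4 ∨ i' = 7) : ¬ clauseGraph.Adj i i' := by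
  rcases hi with rfl | rfl | rfl <;> rcases hi' with rfl | rfl | rfl <;>
    simp [clauseGraph]

/-- Two path vertices are adjacent only if they are consecutive on the same path. -/
lemma adj_inl_inl {L : Type*} {m : ℕ} {C : Fin m → L × L × L} {x y : L} {i j : Fin (2*m+3)}
    (h : (gammaGraph C).Adj (Sum.inl (x, i)) (Sum.inl (y, j))) :
    x = y ∧ ((i : ℕ) + 1 = j ∨ (j : ℕ) + 1 = i) := by
  obtain ⟨-, (⟨z, l, hl, h1, h2⟩ | ⟨k, a, b, hab, h1, h2⟩) |
    (⟨z, l, hl, h1, h2⟩ | ⟨k, a, b, hab, h1, h2⟩)⟩ := (SimpleGraph.fromRel_adj _ _ _).1 h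
  · simp only [Sum.inl.injEq, Prod.mk.injEq, Fin.ext_iff] at h1 h2
    exact ⟨h1.1.trans h2.1.symm, by omega⟩
  · exact absurd hab (clauseGraph_literals_not_adj (clauseVertex_eq_inl h1.symm).1
      (clauseVertex_eq_inl h2.symm).1)
  · simp only [Sum.inl.injEq, Prod.mk.injEq, Fin.ext_iff] at h1 h2
    exact ⟨h2.1.trans h1.1.symm, by omega⟩
  · exact absurd hab (clauseGraph_literals_not_adj (clauseVertex_eq_inl h1.symm).1
      (clauseVertex_eq_inl h2.symm).1)

lemma adj_inl_odd {L : Type*} {m : ℕ} {C : Fin m → L × L × L} {x : L} {j : Fin (2*m+3)}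
    {b : GammaVertex L m} (hj : (j : ℕ) % 2 = 1) (h : (gammaGraph C).Adj (Sum.inl (x, j)) b) :
    ∃ p, b = Sum.inl p := by
  obtain ⟨-, (⟨z, l, hl, h1, h2⟩ | ⟨k, a, c, hac, h1, h2⟩) |
    (⟨z, l, hl, h1, h2⟩ | ⟨k, a, c, hac, h1, h2⟩)⟩ := (SimpleGraph.fromRel_adj _ _ _).1 h
  · exact ⟨_, h2⟩
  · have := (clauseVertex_eq_inl h1.symm).2
    omega
  · exact ⟨_, h1⟩
  · have := (clauseVertex_eq_inl h2.symm).2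
    omega

/-- A path edge lies in no triangle. -/
lemma no_common_neighbor {L : Type*} {m : ℕ} {C : Fin m → L × L × L} {x : L}
    {i j : Fin (2*m+3)} (hij : (i : ℕ) + 1 = j ∨ (j : ℕ) + 1 = i) {z : GammaVertex L m}
    (hi : (gammaGraph C).Adj (Sum.inl (x, i)) z) (hj : (gammaGraph C).Adj (Sum.inl (x, j)) z) :
    False := by
  have hz : ∃ p, z = Sum.inl p := by
    rcases Nat.mod_two_eq_zero_or_one i with h | h
    · exact adj_inl_odd (by omega) hj
    · exact adj_inl_odd h hi
  obtain ⟨⟨y, l⟩, rfl⟩ := hz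
  -- A common neighbour would have index parity opposite to both `i` and `j`.
  have h1 := (adj_inl_inl hi).2
  have h2 := (adj_inl_inl hj).2
  omega

lemma path_adj {L : Type*} {m : ℕ} (C : Fin m → L × L × L) (x : L)
    {i j : Fin (2*m+3)} (hij : (i : ℕ) + 1 = j) :
    (gammaGraph C).Adj (Sum.inl (x, i)) (Sum.inl (x, j)) := by
  refine (SimpleGraph.fromRel_adj _ _ _).2 ⟨?_, Or.inl (Or.inl ⟨x, i, by omega, rfl, ?_⟩)⟩
  · simp only [ne_eq, Sum.inl.injEq, Prod.mk.injEq, Fin.ext_iff]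
    omega
  · exact congrArg (fun l => Sum.inl (x, l)) (Fin.ext hij.symm)

namespace MixedGraph

variable {V : Type*} {H : MixedGraph V} {Γ : SimpleGraph V}

lemma IsPartialOrientationOf.arc_or_arc (hPO : H.IsPartialOrientationOf Γ)
    (hQT : H.QuasiTransitive) {a b : V} (hab : Γ.Adj a b)
    (hno : ∀ z, Γ.Adj a z → Γ.Adj b z → False) : H.Arc a b ∨ H.Arc b a := by
  rcases (hPO a b).1 hab with h | h
  · obtain ⟨z, ⟨h1, h2⟩ | ⟨h1, h2⟩⟩ := hQT.2 a b h
    · exact (hno z ((hPO _ _).2 (by tauto)) ((hPO _ _).2 (by tauto))).elim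
    · exact (hno z ((hPO _ _).2 (by tauto)) ((hPO _ _).2 (by tauto))).elim
  · exact h

lemma IsPartialOrientationOf.isSource_and_isSink (hPO : H.IsPartialOrientationOf Γ)
    (hQT : H.QuasiTransitive) {a b : V} (hab : H.Arc a b)
    (hno : ∀ z, Γ.Adj a z → Γ.Adj b z → False) : H.IsSource a ∧ H.IsSink b := by
  constructor
  · intro z hz
    exact hno z ((hPO _ _).2 (by tauto)) ((hPO z b).2 (hQT.1 z a b hz hab)).symm
  · intro z hz
    exact hno z ((hPO a z).2 (hQT.1 a b z hab hz)) ((hPO _ _).2 (by tauto))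

end MixedGraph

/-- In every partial orientation of `Γ_Y` as a quasi-transitive mixed graph,
for each variable `x`: every edge of the path `P_x` is oriented as an arc, the
path is oriented as an alternating path (every vertex of `P_x` is a source or a
sink), and for `1 ≤ k ≤ m` the vertex `x_{2k}` is a source iff `x₀` is. -/
theorem gammaGraph_paths_alternating {L : Type*} {m : ℕ} (C : Fin m → L × L × L)
    (H : MixedGraph (GammaVertex L m))
    (hPO : H.IsPartialOrientationOf (gammaGraph C)) (hQT : H.QuasiTransitive)
    (x : L) :
    (∀ (j : ℕ) (hj : j + 1 < 2*m+3),
      H.Arc (Sum.inl (x, ⟨j, by omega⟩)) (Sum.inl (x, ⟨j+1, hj⟩)) ∨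
      H.Arc (Sum.inl (x, ⟨j+1, hj⟩)) (Sum.inl (x, ⟨j, by omega⟩))) ∧
    (∀ j : Fin (2*m+3),
      H.IsSource (Sum.inl (x, j)) ∨ H.IsSink (Sum.inl (x, j))) ∧
    (∀ k : ℕ, 1 ≤ k → ∀ hk : k ≤ m,
      (H.IsSource (Sum.inl (x, ⟨2*k, by omega⟩)) ↔
        H.IsSource (Sum.inl (x, ⟨0, by omega⟩)))) := by
  have hno : ∀ i j : Fin (2*m+3), (i : ℕ) + 1 = j → ∀ z,
      (gammaGraph C).Adj (Sum.inl (x, i)) z → (gammaGraph C).Adj (Sum.inl (x, j)) z → False :=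
    fun i j hij z => no_common_neighbor (Or.inl hij)
  have harc : ∀ i j : Fin (2*m+3), (i : ℕ) + 1 = j →
      H.Arc (Sum.inl (x, i)) (Sum.inl (x, j)) ∨ H.Arc (Sum.inl (x, j)) (Sum.inl (x, i)) :=
    fun i j hij => hPO.arc_or_arc hQT (path_adj C x hij) (hno i j hij)
  have hfwd : ∀ i j : Fin (2*m+3), (i : ℕ) + 1 = j →
      H.Arc (Sum.inl (x, i)) (Sum.inl (x, j)) →
      H.IsSource (Sum.inl (x, i)) ∧ H.IsSink (Sum.inl (x, j)) :=
    fun i j hij h => hPO.isSource_and_isSink hQT h (hno i j hij)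
  have hbwd : ∀ i j : Fin (2*m+3), (i : ℕ) + 1 = j →
      H.Arc (Sum.inl (x, j)) (Sum.inl (x, i)) →
      H.IsSource (Sum.inl (x, j)) ∧ H.IsSink (Sum.inl (x, i)) :=
    fun i j hij h => hPO.isSource_and_isSink hQT h fun z h1 h2 => hno i j hij z h2 h1
  have hflip : ∀ i j : Fin (2*m+3), (i : ℕ) + 1 = j →
      (H.IsSource (Sum.inl (x, j)) ↔ ¬ H.IsSource (Sum.inl (x, i))) := by
    intro i j hij
    rcases harc i j hij with h | h
    · exact iff_of_false (fun hs => hs _ h) (not_not.2 (hfwd i j hij h).1)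
    · exact iff_of_true (hbwd i j hij h).1 fun hs => hs _ h
  refine ⟨fun j hj => harc _ _ rfl, fun j => ?_, ?_⟩
  · -- The last vertex of the path has no successor, so its predecessor is used instead.
    by_cases hj : (j : ℕ) + 1 < 2*m+3
    · rcases harc j ⟨j + 1, hj⟩ rfl with h | h
      · exact Or.inl (hfwd _ _ rfl h).1
      · exact Or.inr (hbwd _ _ rfl h).2
    · have hp : ((⟨j - 1, by omega⟩ : Fin (2*m+3)) : ℕ) + 1 = j := by
        change (j : ℕ) - 1 + 1 = j
        omega
      rcases harc _ j hp with h | h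
      · exact Or.inr (hfwd _ _ hp h).2
      · exact Or.inl (hbwd _ _ hp h).1
  · have key : ∀ k : ℕ, ∀ hk : k ≤ m,
        (H.IsSource (Sum.inl (x, ⟨2*k, by omega⟩)) ↔
          H.IsSource (Sum.inl (x, ⟨0, by omega⟩))) := by
      intro k
      induction k with
      | zero => intro _; rfl
      | succ k ih =>
        intro hk
        rw [← ih (by omega), hflip ⟨2*k+1, by omega⟩ ⟨2*(k+1), by omega⟩ rfl,
          hflip ⟨2*k, by omega⟩ ⟨2*k+1, by omega⟩ rfl, not_not]
    exact fun k _ hk => key k hk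
end
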